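/- Let q ∈ [2,∞] with dual exponent q* (1/q + 1/q* = 1), let r, s ≥ 1, let J ∈ ℝ^{s×r} have orthonormal columns, and let γ ∈ (0,1). Define V ∈ ℝ^{(r+s)×r} as the block matrix whose top r×r block is √(1−γ²)·I_r and whose bottom s×r block is γ·J. Then V has orthonormal columns, and the orthogonal projection VVᵀ satisfies ‖VVᵀ‖_{q→2} ≤ √(1−γ²)·r^{1/q*−1/2} + γ·s^{1/q*−1/2}. In particular, for q = ∞: ‖VVᵀ‖_{∞→2} ≤ √r + γ√s. -/

import Mathlib

open scoped BigOperators ENNReal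
open Matrix

/-- The `ℓ_q` norm of a real vector, for `q ∈ [1,∞]` given as an extended nonnegative real
(`q = ⊤` is the max/sup norm). -/
noncomputable def vecNorm {ι : Type*} [Fintype ι] (q : ℝ≥0∞) (v : ι → ℝ) : ℝ :=
  if q = ⊤ then ⨆ i, |v i| else (∑ i, |v i| ^ q.toReal) ^ (1 / q.toReal)

/-- The `q → p` operator norm of a real matrix:
`‖M‖_{q→p} = sup { ‖Mx‖_p : ‖x‖_q ≤ 1 }`. -/
noncomputable def opNorm {ι₁ ι₂ : Type*} [Fintype ι₁] [Fintype ι₂] (q p : ℝ≥0∞)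
    (M : Matrix ι₁ ι₂ ℝ) : ℝ :=
  sSup {y : ℝ | ∃ x : ι₂ → ℝ, vecNorm q x ≤ 1 ∧ y = vecNorm p (M.mulVec x)}

/-- The squared Frobenius norm of a real matrix. -/
noncomputable def frobSq {ι₁ ι₂ : Type*} [Fintype ι₁] [Fintype ι₂] (M : Matrix ι₁ ι₂ ℝ) : ℝ :=
  ∑ i, ∑ j, (M i j) ^ 2

/-!
Since `V` has orthonormal columns, it preserves the Euclidean norm, so `‖VVᵀx‖₂ = ‖Vᵀx‖₂`, and
`Vᵀx` splits as `√(1-γ²) x₁ + γ Jᵀx₂` along the two blocks of `x`. Transposes of matrices with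
orthonormal columns are contractions, so `‖Vᵀx‖₂ ≤ √(1-γ²) ‖x₁‖₂ + γ ‖x₂‖₂`, and the power mean
inequality trades the Euclidean norm of each block for its `ℓ_q` norm, at the cost of the power
`1/2 - 1/q = 1/q* - 1/2` of the size of the block.
-/

section VecNorm

variable {ι κ : Type*} [Fintype ι] [Fintype κ]

theorem vecNorm_eq_norm_toLp {q : ℝ≥0∞} (hq : q ≠ 0) (x : ι → ℝ) :
    vecNorm q x = ‖WithLp.toLp q x‖ := by
  rcases eq_or_ne q ⊤ with rfl | hq_top
  · simp [vecNorm, PiLp.norm_eq_ciSup]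
  · simp [vecNorm, hq_top, PiLp.norm_eq_sum (ENNReal.toReal_pos hq hq_top)]

theorem vecNorm_top (x : ι → ℝ) : vecNorm ⊤ x = ⨆ i, |x i| := if_pos rfl

theorem vecNorm_of_ne_top {q : ℝ≥0∞} (hq : q ≠ ⊤) (x : ι → ℝ) :
    vecNorm q x = (∑ i, |x i| ^ q.toReal) ^ (1 / q.toReal) := if_neg hq

theorem abs_le_vecNorm_top (x : ι → ℝ) (i : ι) : |x i| ≤ vecNorm ⊤ x := by
  rw [vecNorm_top]
  exact le_ciSup (f := fun i => |x i|) (Set.finite_range _).bddAbove i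

theorem vecNorm_nonneg (q : ℝ≥0∞) (x : ι → ℝ) : 0 ≤ vecNorm q x := by
  rcases eq_or_ne q ⊤ with rfl | hq
  · rw [vecNorm_top]
    exact Real.iSup_nonneg fun i => abs_nonneg (x i)
  · rw [vecNorm_of_ne_top hq]
    positivity

theorem vecNorm_add_le {q : ℝ≥0∞} (hq : 1 ≤ q) (x y : ι → ℝ) :
    vecNorm q (x + y) ≤ vecNorm q x + vecNorm q y := by
  have hq₀ : q ≠ 0 := (zero_lt_one.trans_le hq).ne'
  have : Fact (1 ≤ q) := ⟨hq⟩
  simpa only [vecNorm_eq_norm_toLp hq₀, WithLp.toLp_add] using norm_add_le _ _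

theorem vecNorm_smul {q : ℝ≥0∞} (hq : 1 ≤ q) (c : ℝ) (x : ι → ℝ) :
    vecNorm q (c • x) = |c| * vecNorm q x := by
  have hq₀ : q ≠ 0 := (zero_lt_one.trans_le hq).ne'
  have : Fact (1 ≤ q) := ⟨hq⟩
  simpa only [vecNorm_eq_norm_toLp hq₀, WithLp.toLp_smul, Real.norm_eq_abs] using
    norm_smul c (WithLp.toLp q x)

theorem vecNorm_comp_le_of_injective (q : ℝ≥0∞) {f : κ → ι} (hf : f.Injective) (x : ι → ℝ) :
    vecNorm q (x ∘ f) ≤ vecNorm q x := by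
  rcases eq_or_ne q ⊤ with rfl | hq
  · rw [vecNorm_top (x ∘ f)]
    exact Real.iSup_le (fun k => abs_le_vecNorm_top x (f k)) (vecNorm_nonneg ⊤ x)
  · rw [vecNorm_of_ne_top hq, vecNorm_of_ne_top hq]
    gcongr
    calc ∑ k, |x (f k)| ^ q.toReal
        = ∑ i ∈ Finset.univ.map ⟨f, hf⟩, |x i| ^ q.toReal := by simp
      _ ≤ ∑ i, |x i| ^ q.toReal :=
          Finset.sum_le_univ_sum_of_nonneg fun i => by positivity

theorem rpow_sum_rpow_le_card_rpow_mul {p q : ℝ} (hp : 0 < p) (hpq : p ≤ q) (x : ι → ℝ) :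
    (∑ i, |x i| ^ p) ^ (1 / p) ≤
      (Fintype.card ι : ℝ) ^ (1 / p - 1 / q) * (∑ i, |x i| ^ q) ^ (1 / q) := by
  have hq : 0 < q := hp.trans_le hpq
  have power_mean : (∑ i, |x i| ^ p) ^ (q / p) ≤
      (Fintype.card ι : ℝ) ^ (q / p - 1) * ∑ i, |x i| ^ q := by
    have h := Real.rpow_sum_le_const_mul_sum_rpow_of_nonneg Finset.univ (f := fun i => |x i| ^ p)
      ((one_le_div hp).2 hpq) fun i _ => by positivity
    simpa only [← Real.rpow_mul (abs_nonneg _), mul_div_cancel₀ q hp.ne', Finset.card_univ] using h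
  calc (∑ i, |x i| ^ p) ^ (1 / p)
      = ((∑ i, |x i| ^ p) ^ (q / p)) ^ (1 / q) := by
        rw [← Real.rpow_mul (by positivity)]
        congr 1
        field_simp
    _ ≤ ((Fintype.card ι : ℝ) ^ (q / p - 1) * ∑ i, |x i| ^ q) ^ (1 / q) := by gcongr
    _ = (Fintype.card ι : ℝ) ^ (1 / p - 1 / q) * (∑ i, |x i| ^ q) ^ (1 / q) := by
        rw [Real.mul_rpow (by positivity) (by positivity), ← Real.rpow_mul (by positivity)]
        congr 2
        field_simp

theorem vecNorm_le_card_rpow_mul_vecNorm_top {p : ℝ≥0∞} (hp : p ≠ 0) (x : ι → ℝ) :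
    vecNorm p x ≤ (Fintype.card ι : ℝ) ^ (1 / p.toReal) * vecNorm ⊤ x := by
  rcases eq_or_ne p ⊤ with rfl | hp_top
  · simp
  have hp_pos : 0 < p.toReal := ENNReal.toReal_pos hp hp_top
  have top_nonneg := vecNorm_nonneg ⊤ x
  calc vecNorm p x = (∑ i, |x i| ^ p.toReal) ^ (1 / p.toReal) := vecNorm_of_ne_top hp_top x
    _ ≤ (∑ _i : ι, vecNorm ⊤ x ^ p.toReal) ^ (1 / p.toReal) := by
        gcongr with i
        exact abs_le_vecNorm_top x i
    _ = (Fintype.card ι : ℝ) ^ (1 / p.toReal) * vecNorm ⊤ x := by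
        rw [Finset.sum_const, Finset.card_univ, nsmul_eq_mul,
          Real.mul_rpow (by positivity) (by positivity), one_div,
          Real.rpow_rpow_inv top_nonneg hp_pos.ne']

/-- Infinite exponents get the correct reciprocal `0`, as `ENNReal.toReal ⊤ = 0` and `1 / 0 = 0`. -/
theorem vecNorm_le_card_rpow_mul_vecNorm {p q : ℝ≥0∞} (hp : p ≠ 0) (hpq : p ≤ q) (x : ι → ℝ) :
    vecNorm p x ≤ (Fintype.card ι : ℝ) ^ (1 / p.toReal - 1 / q.toReal) * vecNorm q x := by
  rcases eq_or_ne q ⊤ with rfl | hq_top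
  · simpa using vecNorm_le_card_rpow_mul_vecNorm_top hp x
  · have hp_top : p ≠ ⊤ := ne_top_of_le_ne_top hq_top hpq
    rw [vecNorm_of_ne_top hp_top, vecNorm_of_ne_top hq_top]
    exact rpow_sum_rpow_le_card_rpow_mul (ENNReal.toReal_pos hp hp_top)
      (ENNReal.toReal_mono hq_top hpq) x

end VecNorm

theorem opNorm_le_of_forall_vecNorm_mulVec_le {ι κ : Type*} [Fintype ι] [Fintype κ] {q p : ℝ≥0∞}
    {M : Matrix ι κ ℝ} {C : ℝ} (hC : 0 ≤ C)
    (hM : ∀ x, vecNorm p (M *ᵥ x) ≤ C * vecNorm q x) : opNorm q p M ≤ C := by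
  apply Real.sSup_le _ hC
  rintro _ ⟨x, hx, rfl⟩
  exact (hM x).trans (mul_le_of_le_one_right hC hx)

section OrthonormalColumns

variable {m n k : Type*} [Fintype m] [Fintype n] [DecidableEq k]

theorem transpose_mul_self_eq_one_iff {R : Type*} [NonAssocSemiring R] {M : Matrix m k R} :
    Mᵀ * M = 1 ↔ ∀ a b, (∑ i, M i a * M i b) = if a = b then 1 else 0 := by
  simp [← Matrix.ext_iff, mul_apply, one_apply]

theorem transpose_mul_self_fromRows_smul {R : Type*} [CommSemiring R] {A : Matrix m k R}
    {B : Matrix n k R} (hA : Aᵀ * A = 1) (hB : Bᵀ * B = 1) {a b : R} (hab : a ^ 2 + b ^ 2 = 1) :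
    (fromRows (a • A) (b • B))ᵀ * fromRows (a • A) (b • B) = 1 := by
  rw [transpose_fromRows, fromCols_mul_fromRows]
  simp only [transpose_smul, Matrix.smul_mul, Matrix.mul_smul, hA, hB, smul_smul, ← add_smul,
    ← sq, hab, one_smul]

variable [Fintype k]

open scoped Matrix.Norms.L2Operator in
theorem l2_opNorm_le_one_of_transpose_mul_self_eq_one {M : Matrix m k ℝ} (hM : Mᵀ * M = 1) :
    ‖M‖ ≤ 1 := by
  have norm_sq : ‖M‖ * ‖M‖ = ‖(1 : Matrix k k ℝ)‖ := by
    rw [← l2_opNorm_conjTranspose_mul_self, conjTranspose_eq_transpose_of_trivial, hM]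
  have norm_one_le : ‖(1 : Matrix k k ℝ)‖ ≤ 1 := by
    rw [← diagonal_one, l2_opNorm_diagonal]
    exact (pi_norm_le_iff_of_nonneg zero_le_one).2 fun _ => norm_one.le
  nlinarith [norm_nonneg M]

open scoped Matrix.Norms.L2Operator in
theorem vecNorm_two_mulVec_le_l2_opNorm_mul (M : Matrix m k ℝ) (x : k → ℝ) :
    vecNorm 2 (M *ᵥ x) ≤ ‖M‖ * vecNorm 2 x := by
  rw [vecNorm_eq_norm_toLp two_ne_zero, vecNorm_eq_norm_toLp two_ne_zero]
  exact l2_opNorm_mulVec M (WithLp.toLp 2 x)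

theorem vecNorm_two_mulVec_le {M : Matrix m k ℝ} (hM : Mᵀ * M = 1) (x : k → ℝ) :
    vecNorm 2 (M *ᵥ x) ≤ vecNorm 2 x :=
  (vecNorm_two_mulVec_le_l2_opNorm_mul M x).trans <|
    mul_le_of_le_one_left (vecNorm_nonneg 2 x) (l2_opNorm_le_one_of_transpose_mul_self_eq_one hM)

theorem vecNorm_two_transpose_mulVec_le {M : Matrix m k ℝ} (hM : Mᵀ * M = 1) (x : m → ℝ) :
    vecNorm 2 (Mᵀ *ᵥ x) ≤ vecNorm 2 x := by
  classical
  refine (vecNorm_two_mulVec_le_l2_opNorm_mul Mᵀ x).trans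
    (mul_le_of_le_one_left (vecNorm_nonneg 2 x) ?_)
  rw [← conjTranspose_eq_transpose_of_trivial, l2_opNorm_conjTranspose]
  exact l2_opNorm_le_one_of_transpose_mul_self_eq_one hM

theorem vecNorm_two_transpose_mulVec_le_card_rpow {M : Matrix m k ℝ} (hM : Mᵀ * M = 1)
    {q : ℝ≥0∞} (hq : 2 ≤ q) (x : m → ℝ) :
    vecNorm 2 (Mᵀ *ᵥ x) ≤ (Fintype.card m : ℝ) ^ (1 / 2 - 1 / q.toReal) * vecNorm q x :=
  (vecNorm_two_transpose_mulVec_le hM x).trans <| by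
    simpa using vecNorm_le_card_rpow_mul_vecNorm two_ne_zero hq x

theorem opNorm_mul_transpose_fromRows_smul_le {A : Matrix m k ℝ} {B : Matrix n k ℝ}
    (hA : Aᵀ * A = 1) (hB : Bᵀ * B = 1) {a b : ℝ} (hab : a ^ 2 + b ^ 2 = 1)
    {q : ℝ≥0∞} (hq : 2 ≤ q) :
    opNorm q 2 (fromRows (a • A) (b • B) * (fromRows (a • A) (b • B))ᵀ) ≤
      |a| * (Fintype.card m : ℝ) ^ (1 / 2 - 1 / q.toReal) +
        |b| * (Fintype.card n : ℝ) ^ (1 / 2 - 1 / q.toReal) := by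
  set e : ℝ := 1 / 2 - 1 / q.toReal
  refine opNorm_le_of_forall_vecNorm_mulVec_le (by positivity) fun x => ?_
  rw [← mulVec_mulVec]
  calc vecNorm 2 (fromRows (a • A) (b • B) *ᵥ ((fromRows (a • A) (b • B))ᵀ *ᵥ x))
      ≤ vecNorm 2 ((fromRows (a • A) (b • B))ᵀ *ᵥ x) :=
        vecNorm_two_mulVec_le (transpose_mul_self_fromRows_smul hA hB hab) _
    _ = vecNorm 2 (a • (Aᵀ *ᵥ (x ∘ Sum.inl)) + b • (Bᵀ *ᵥ (x ∘ Sum.inr))) := by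
        rw [transpose_fromRows, fromCols_mulVec, transpose_smul, transpose_smul, smul_mulVec,
          smul_mulVec]
    _ ≤ |a| * vecNorm 2 (Aᵀ *ᵥ (x ∘ Sum.inl)) + |b| * vecNorm 2 (Bᵀ *ᵥ (x ∘ Sum.inr)) := by
        rw [← vecNorm_smul one_le_two, ← vecNorm_smul one_le_two]
        exact vecNorm_add_le one_le_two _ _
    _ ≤ |a| * ((Fintype.card m : ℝ) ^ e * vecNorm q (x ∘ Sum.inl)) +
          |b| * ((Fintype.card n : ℝ) ^ e * vecNorm q (x ∘ Sum.inr)) := by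
        gcongr
        · exact vecNorm_two_transpose_mulVec_le_card_rpow hA hq _
        · exact vecNorm_two_transpose_mulVec_le_card_rpow hB hq _
    _ ≤ |a| * ((Fintype.card m : ℝ) ^ e * vecNorm q x) +
          |b| * ((Fintype.card n : ℝ) ^ e * vecNorm q x) := by
        gcongr
        · exact vecNorm_comp_le_of_injective q Sum.inl_injective x
        · exact vecNorm_comp_le_of_injective q Sum.inr_injective x
    _ = (|a| * (Fintype.card m : ℝ) ^ e + |b| * (Fintype.card n : ℝ) ^ e) * vecNorm q x := by ring

end OrthonormalColumns

theorem one_div_eq_one_sub_of_one_div_add_ofReal_eq_one {q : ℝ≥0∞} (hq : 1 < q) {qs : ℝ}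
    (hdual : 1 / q + ENNReal.ofReal (1 / qs) = 1) : 1 / qs = 1 - 1 / q.toReal := by
  have inv_lt_one : 1 / q.toReal < 1 := by
    simpa using ENNReal.toReal_strict_mono ENNReal.one_ne_top (ENNReal.inv_lt_one.2 hq)
  have hdual_real : 1 / q.toReal + max (1 / qs) 0 = 1 := by
    have h := congrArg ENNReal.toReal hdual
    have inv_ne_top : 1 / q ≠ ⊤ := by simpa using (zero_lt_one.trans hq).ne'
    rwa [ENNReal.toReal_add inv_ne_top ENNReal.ofReal_ne_top, ENNReal.toReal_ofReal',
      ENNReal.toReal_div, ENNReal.toReal_one] at h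
  have qs_inv_pos : 0 < 1 / qs := by
    by_contra! h
    rw [max_eq_right h] at hdual_real
    linarith
  rw [max_eq_left qs_inv_pos.le] at hdual_real
  linarith

theorem embedded_subspace_robustness_general {m n k : Type*} [Fintype m] [Fintype n] [Fintype k]
    [DecidableEq k] {q : ℝ≥0∞} (hq : 2 ≤ q) {qs : ℝ}
    (hdual : 1 / q + ENNReal.ofReal (1 / qs) = 1) {A : Matrix m k ℝ} {B : Matrix n k ℝ}
    (hA : Aᵀ * A = 1) (hB : Bᵀ * B = 1) {a b : ℝ} (hab : a ^ 2 + b ^ 2 = 1)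
    {V : Matrix (m ⊕ n) k ℝ} (hV : V = fromRows (a • A) (b • B)) :
    Vᵀ * V = 1 ∧
      opNorm q 2 (V * Vᵀ) ≤
        |a| * (Fintype.card m : ℝ) ^ (1 / qs - 1 / 2) +
          |b| * (Fintype.card n : ℝ) ^ (1 / qs - 1 / 2) ∧
      (q = ⊤ → opNorm ⊤ 2 (V * Vᵀ) ≤ √(Fintype.card m) + |b| * √(Fintype.card n)) := by
  subst hV
  have bound := opNorm_mul_transpose_fromRows_smul_le hA hB hab hq
  refine ⟨transpose_mul_self_fromRows_smul hA hB hab, ?_, ?_⟩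
  · have exponent_eq : 1 / qs - 1 / 2 = 1 / 2 - 1 / q.toReal := by
      rw [one_div_eq_one_sub_of_one_div_add_ofReal_eq_one (ENNReal.one_lt_two.trans_le hq) hdual]
      ring
    rwa [exponent_eq]
  · rintro rfl
    have abs_a_le_one : |a| ≤ 1 := abs_le_one_iff_mul_self_le_one.2 (by nlinarith [sq_nonneg b])
    refine bound.trans ?_
    simp only [ENNReal.toReal_top, div_zero, sub_zero, ← Real.sqrt_eq_rpow]
    gcongr
    exact mul_le_of_le_one_left (Real.sqrt_nonneg _) abs_a_le_one

/-- For `q ∈ [2,∞]` with dual exponent `q*`, an `s×r` matrix `J` with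
orthonormal columns and `γ ∈ (0,1)`, the block matrix `V = [√(1−γ²)·I_r ; γ·J]` has orthonormal
columns and `‖VVᵀ‖_{q→2} ≤ √(1−γ²)·r^(1/q*−1/2) + γ·s^(1/q*−1/2)`; in particular for `q = ∞`,
`‖VVᵀ‖_{∞→2} ≤ √r + γ√s`. -/
theorem embedded_subspace_robustness (q : ℝ≥0∞) (hq : 2 ≤ q)
    (qs : ℝ) (hqs1 : 1 ≤ qs) (hqs2 : qs ≤ 2)
    (hdual : 1 / q + ENNReal.ofReal (1 / qs) = 1)
    (r s : ℕ) (hr : 1 ≤ r) (hs : 1 ≤ s)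
    (J : Matrix (Fin s) (Fin r) ℝ)
    (hJ : ∀ a b, (∑ i, J i a * J i b) = if a = b then 1 else 0)
    (γ : ℝ) (hγ0 : 0 < γ) (hγ1 : γ < 1) :
    ∀ V : Matrix (Fin r ⊕ Fin s) (Fin r) ℝ,
      V = Matrix.fromRows (Real.sqrt (1 - γ ^ 2) • (1 : Matrix (Fin r) (Fin r) ℝ)) (γ • J) →
      (∀ a b, (∑ i, V i a * V i b) = if a = b then 1 else 0) ∧
      opNorm q 2 (V * Vᵀ) ≤
        Real.sqrt (1 - γ ^ 2) * (r : ℝ) ^ (1 / qs - 1 / 2) +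
          γ * (s : ℝ) ^ (1 / qs - 1 / 2) ∧
      (q = ⊤ → opNorm ⊤ 2 (V * Vᵀ) ≤ Real.sqrt r + γ * Real.sqrt s) := by
  intro V hV
  have weights_sq : √(1 - γ ^ 2) ^ 2 + γ ^ 2 = 1 := by rw [Real.sq_sqrt (by nlinarith)]; ring
  simpa [abs_of_pos hγ0, abs_of_nonneg (Real.sqrt_nonneg _), transpose_mul_self_eq_one_iff] using
    embedded_subspace_robustness_general hq hdual (by simp) (transpose_mul_self_eq_one_iff.2 hJ)
      weights_sq hV
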